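/- Let G be a discrete bidding game whose directed graph (V,E) is strongly connected and in which tie-breaking is resolved by a transducer that always prefers Player 1 (Player 1 wins every tied bidding). Then for every pair of initial budgets B1, B2 with B1 + B2 = N and every initial vertex, Player 1 has a strategy such that against every strategy of Player 2, the resulting play visits every vertex of V infinitely often. -/

import Mathlib

/-!
Player 1 bids `0` forever. Since he wins ties, each round either both players bid `0`, in which
case he moves for free, or Player 2 wins and pays at least `1`. Hence Player 1's budget never
decreases, and it strictly increases whenever Player 2 wins; being bounded by the total budget, it
is eventually constant, and from then on Player 1 makes every move (`eventually_bid_zero`).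

It remains to choose the moves of Player 1 so that, once he controls the token, every vertex is
visited infinitely often. Time is cut into phases whose length exceeds every graph distance, each
phase is given a target vertex, every vertex being the target of infinitely many phases, and during
a phase Player 1 steps to a successor strictly closer to the target (`zeroStrat`). In a phase that
starts after Player 2 has stopped winning, the target is reached (`playAux_reaches_target`).
-/

/-! # Discrete bidding games -/

namespace Bid

/-- A tie-breaking mechanism with a set `S` of states.  When a tie occurs in
state `s`, Player `chooser s` selects the winner of the bidding from the
nonempty set `opts s` (a deterministic mechanism has a singleton `opts s`, so
the choice is forced).  After each bidding the state is updated by `update`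
from the outcome of the bidding: whether a tie occurred, the winner, the
winning bid, and the vertex the winner moved to.  Player 1 is `0 : Fin 2`,
Player 2 is `1 : Fin 2`. -/
structure Mech (V : Type) where
  S : Type
  opts : S → Set (Fin 2)
  opts_nonempty : ∀ s, (opts s).Nonempty
  chooser : S → Fin 2
  update : S → Bool → Fin 2 → ℕ → V → S

/-- A discrete bidding game: a finite directed graph in which every vertex has
an outgoing edge, a total budget `N`, a tie-breaking mechanism, and an
objective for Player 1 on infinite vertex sequences. -/
structure Game (V : Type) where
  E : V → V → Prop
  succ_exists : ∀ v, ∃ u, E v u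
  N : ℕ
  M : Mech V
  obj : (ℕ → V) → Prop

/-- A configuration `⟨v, B1, B2, s⟩`: token position, budgets, mechanism state. -/
structure Conf (V S : Type) where
  v : V
  B1 : ℕ
  B2 : ℕ
  s : S

/-- A round of the game, as recorded in histories: the configuration and the
two bids. -/
abbrev Round (V S : Type) := Conf V S × ℕ × ℕ

abbrev Hist (V S : Type) := List (Round V S)

/-- A (pure) strategy: a bid for each history and current configuration, a
choice of bidding winner upon a tie (used when this player is the mechanism's
chooser), and a choice of successor vertex upon winning a bidding. -/
structure Strat (V : Type) (M : Mech V) where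
  bid : Hist V M.S → Conf V M.S → ℕ
  choice : Hist V M.S → Conf V M.S → ℕ → Fin 2
  move : Hist V M.S → Conf V M.S → ℕ → ℕ → V

def budget {V S : Type} (i : Fin 2) (c : Conf V S) : ℕ :=
  if i = 0 then c.B1 else c.B2

/-- Legality of a strategy for Player `i`: bids never exceed the available
budget, tie choices are members of the mechanism's option set, and moves
follow edges of the graph. -/
def Legal {V : Type} (G : Game V) (i : Fin 2) (σ : Strat V G.M) : Prop :=
  (∀ h c, σ.bid h c ≤ budget i c) ∧
  (∀ h c b, σ.choice h c b ∈ G.M.opts c.s) ∧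
  (∀ h c b1 b2, G.E c.v (σ.move h c b1 b2))

/-- The configuration after a bidding at `c` with bids `b1, b2`, tie flag
`tie`, bidding winner `w` and destination `d`: the winner pays his bid to the
loser, the token moves to `d`, and the mechanism state is updated. -/
def nextConf {V : Type} (G : Game V) (c : Conf V G.M.S) (b1 b2 : ℕ) (tie : Bool)
    (w : Fin 2) (d : V) : Conf V G.M.S :=
  { v := d
    B1 := if w = 0 then c.B1 - b1 else c.B1 + b2
    B2 := if w = 0 then c.B2 + b1 else c.B2 - b2
    s := G.M.update c.s tie w (if w = 0 then b1 else b2) d }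

/-- One round of the play of two strategies. -/
def stepPlay {V : Type} (G : Game V) (σ1 σ2 : Strat V G.M)
    (p : Hist V G.M.S × Conf V G.M.S) : Hist V G.M.S × Conf V G.M.S :=
  let h := p.1
  let c := p.2
  let b1 := σ1.bid h c
  let b2 := σ2.bid h c
  let w : Fin 2 :=
    if b2 < b1 then 0
    else if b1 < b2 then 1
    else if G.M.chooser c.s = 0 then σ1.choice h c b1 else σ2.choice h c b1
  let d := if w = 0 then σ1.move h c b1 b2 else σ2.move h c b1 b2
  (h ++ [(c, b1, b2)], nextConf G c b1 b2 (decide (b1 = b2)) w d)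

def playAux {V : Type} (G : Game V) (σ1 σ2 : Strat V G.M) (c0 : Conf V G.M.S) :
    ℕ → Hist V G.M.S × Conf V G.M.S
  | 0 => ([], c0)
  | n + 1 => stepPlay G σ1 σ2 (playAux G σ1 σ2 c0 n)

/-- The vertex path of the play of `σ1` against `σ2` from `c0`. -/
def path {V : Type} (G : Game V) (σ1 σ2 : Strat V G.M) (c0 : Conf V G.M.S) (n : ℕ) : V :=
  (playAux G σ1 σ2 c0 n).2.v

/-- `σ` is a winning strategy for Player `i` at the configuration `c`. -/
def WinStrat {V : Type} (G : Game V) (i : Fin 2) (σ : Strat V G.M)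
    (c : Conf V G.M.S) : Prop :=
  Legal G i σ ∧ ∀ τ : Strat V G.M, Legal G (1 - i) τ →
    (if i = 0 then G.obj (path G σ τ c) else ¬ G.obj (path G τ σ c))

/-- Player `i` has a winning strategy from configuration `c`. -/
def HasWin {V : Type} (G : Game V) (i : Fin 2) (c : Conf V G.M.S) : Prop :=
  ∃ σ, WinStrat G i σ c

/-! ## The turn-based game `G_1` in which Player 1 reveals his bid first. -/

/-- A Player 2 strategy in `G_1`: its bid may additionally depend on the bid
just revealed by Player 1. -/
structure RespStrat (V : Type) (M : Mech V) where
  bid : Hist V M.S → Conf V M.S → ℕ → ℕ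
  choice : Hist V M.S → Conf V M.S → ℕ → Fin 2
  move : Hist V M.S → Conf V M.S → ℕ → ℕ → V

def RespLegal {V : Type} (G : Game V) (τ : RespStrat V G.M) : Prop :=
  (∀ h c b1, τ.bid h c b1 ≤ c.B2) ∧
  (∀ h c b, τ.choice h c b ∈ G.M.opts c.s) ∧
  (∀ h c b1 b2, G.E c.v (τ.move h c b1 b2))

def stepPlayFirst {V : Type} (G : Game V) (σ : Strat V G.M) (τ : RespStrat V G.M)
    (p : Hist V G.M.S × Conf V G.M.S) : Hist V G.M.S × Conf V G.M.S :=
  let h := p.1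
  let c := p.2
  let b1 := σ.bid h c
  let b2 := τ.bid h c b1
  let w : Fin 2 :=
    if b2 < b1 then 0
    else if b1 < b2 then 1
    else if G.M.chooser c.s = 0 then σ.choice h c b1 else τ.choice h c b1
  let d := if w = 0 then σ.move h c b1 b2 else τ.move h c b1 b2
  (h ++ [(c, b1, b2)], nextConf G c b1 b2 (decide (b1 = b2)) w d)

def playFirstAux {V : Type} (G : Game V) (σ : Strat V G.M) (τ : RespStrat V G.M)
    (c0 : Conf V G.M.S) : ℕ → Hist V G.M.S × Conf V G.M.S
  | 0 => ([], c0)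
  | n + 1 => stepPlayFirst G σ τ (playFirstAux G σ τ c0 n)

def pathFirst {V : Type} (G : Game V) (σ : Strat V G.M) (τ : RespStrat V G.M)
    (c0 : Conf V G.M.S) (n : ℕ) : V :=
  (playFirstAux G σ τ c0 n).2.v

/-- Player 1 has a winning strategy from configuration `c` in the turn-based
game `G_1` in which he reveals his bid before Player 2. -/
def P1WinsFirst {V : Type} (G : Game V) (c : Conf V G.M.S) : Prop :=
  ∃ σ : Strat V G.M, Legal G 0 σ ∧
    ∀ τ : RespStrat V G.M, RespLegal G τ → G.obj (pathFirst G σ τ c)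

/-! ## The bidding matrix -/

/-- The position of `G_1` reached from `c` after bids `b1, b2` with bidding
winner `w` is winning for Player 1: if Player 1 won the bidding he can choose a
successor leading to a configuration from which he wins `G_1`, and if Player 2
won the bidding then every successor he may choose leads to such a
configuration. -/
def AfterWin {V : Type} (G : Game V) (c : Conf V G.M.S) (b1 b2 : ℕ) (tie : Bool)
    (w : Fin 2) : Prop :=
  if w = 0 then ∃ d, G.E c.v d ∧ P1WinsFirst G (nextConf G c b1 b2 tie w d)
  else ∀ d, G.E c.v d → P1WinsFirst G (nextConf G c b1 b2 tie w d)

/-- The position of `G_1` reached from `c` after the bids `b1, b2` — just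
before the bidding winner chooses a successor vertex and, on a tie, before the
mechanism's chooser decides who wins the bidding — is winning for Player 1. -/
def PosWin1 {V : Type} (G : Game V) (c : Conf V G.M.S) (b1 b2 : ℕ) : Prop :=
  if b1 = b2 then
    if G.M.chooser c.s = 0 then ∃ w ∈ G.M.opts c.s, AfterWin G c b1 b2 true w
    else ∀ w ∈ G.M.opts c.s, AfterWin G c b1 b2 true w
  else AfterWin G c b1 b2 false (if b2 < b1 then 0 else 1)

open Classical in
/-- The bidding matrix of the configuration `c`: `Mc G c b1 b2 = 1` if the
position of `G_1` reached from `c` after the bids `b1, b2` is winning for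
Player 1 in `G_1`, and `= 2` otherwise. -/
noncomputable def Mc {V : Type} (G : Game V) (c : Conf V G.M.S) (b1 b2 : ℕ) : ℕ :=
  if PosWin1 G c b1 b2 then 1 else 2

/-! ## Particular tie-breaking mechanisms -/

/-- A general tie-breaking transducer: its state is updated from the letter
describing the outcome of a bidding (vertex moved to, winner, whether a tie
occurred, winning bid), and on a tie in state `q` Player `Γ q` wins. -/
structure TieTransducer (V : Type) where
  Q : Type
  q0 : Q
  δ : Q → V → Fin 2 → Bool → ℕ → Q
  Γ : Q → Fin 2

/-- The mechanism of a tie-breaking transducer. -/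
def TieTransducer.mech {V : Type} (T : TieTransducer V) : Mech V where
  S := T.Q
  opts := fun q => {T.Γ q}
  opts_nonempty := fun q => ⟨T.Γ q, rfl⟩
  chooser := fun q => T.Γ q
  update := fun q tie w b d => T.δ q d w tie b

/-- A tie-breaking transducer that is un-aware of ties: its input letters
record only the vertex moved to, the winner, and the winning bid. -/
structure TieTransducerUA (V : Type) where
  Q : Type
  q0 : Q
  δ : Q → V → Fin 2 → ℕ → Q
  Γ : Q → Fin 2

/-- The mechanism of a tie-breaking transducer that is un-aware of ties. -/
def TieTransducerUA.mech {V : Type} (T : TieTransducerUA V) : Mech V where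
  S := T.Q
  opts := fun q => {T.Γ q}
  opts_nonempty := fun q => ⟨T.Γ q, rfl⟩
  chooser := fun q => T.Γ q
  update := fun q _tie w b d => T.δ q d w b

/-- Advantage-based tie-breaking: the state records the advantage holder; on a
tie the holder chooses the winner; if he chooses himself the advantage passes
to the opponent, otherwise he keeps it; non-tied biddings leave the state
unchanged. -/
def advMech (V : Type) : Mech V where
  S := Fin 2
  opts := fun _ => Set.univ
  opts_nonempty := fun _ => ⟨0, Set.mem_univ 0⟩
  chooser := fun s => s
  update := fun s tie w _ _ => if tie then (if w = s then 1 - s else s) else s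

/-- Alternating tie-breaking: the state records the advantage holder; on a tie
the holder wins the bidding and the advantage passes to the other player;
non-tied biddings leave the state unchanged. -/
def altMech (V : Type) : Mech V where
  S := Fin 2
  opts := fun s => {s}
  opts_nonempty := fun s => ⟨s, rfl⟩
  chooser := fun s => s
  update := fun s tie _ _ _ => if tie then 1 - s else s

end Bid

namespace Bid

/-! ### Distances and target sequences -/

/-- There is a walk with exactly `n` edges from `v` to `u`. -/
def Reach {V : Type} (E : V → V → Prop) : ℕ → V → V → Prop
  | 0, v, u => v = u
  | n + 1, v, u => ∃ w, E v w ∧ Reach E n w u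

/-- In a strongly connected graph there is a function (the distance) such that from every `v ≠ u`
some edge strictly decreases the value towards `u`. -/
lemma exists_dist {V : Type} (E : V → V → Prop)
    (hconn : ∀ u v : V, Relation.ReflTransGen E u v) :
    ∃ d : V → V → ℕ, ∀ v u, v ≠ u → ∃ w, E v w ∧ d w u < d v u := by
  classical
  have hr : ∀ v u, ∃ n, Reach E n v u := by
    intro v u
    induction hconn v u using Relation.ReflTransGen.head_induction_on with
    | refl => exact ⟨0, rfl⟩
    | head h _ ih =>
      obtain ⟨n, hn⟩ := ih
      exact ⟨n + 1, _, h, hn⟩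
  refine ⟨fun v u => Nat.find (hr v u), fun v u hvu => ?_⟩
  have hspec := Nat.find_spec (hr v u)
  rcases hn : Nat.find (hr v u) with _ | n
  · rw [hn] at hspec
    exact absurd hspec hvu
  · rw [hn] at hspec
    obtain ⟨w, hw, hwn⟩ := hspec
    refine ⟨w, hw, ?_⟩
    have := Nat.find_min' (hr w u) hwn
    simp only [hn]
    omega

lemma exists_frequent_seq (V : Type) [Countable V] [Nonempty V] :
    ∃ f : ℕ → V, ∀ u m, ∃ k ≥ m, f k = u := by
  obtain ⟨g, hg⟩ := exists_surjective_nat V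
  refine ⟨fun k => g k.unpair.1, fun u m => ?_⟩
  obtain ⟨a, rfl⟩ := hg u
  exact ⟨Nat.pair a m, Nat.right_le_pair a m, by simp⟩

/-! ### The zero-bidding strategy -/

open Classical in
/-- The strategy of Player 1 that always bids `0` and claims all ties. In round `n`, which is the
length of the history, the target vertex is `t n`, and the move goes to a successor at which
`d · (t n)` is strictly smaller, if there is one. -/
noncomputable def zeroStrat {V : Type} (G : Game V) (d : V → V → ℕ) (t : ℕ → V) :
    Strat V G.M where
  bid _ _ := 0
  choice _ _ _ := 0
  move h c _ _ :=
    if hw : ∃ w, G.E c.v w ∧ d w (t h.length) < d c.v (t h.length) then hw.choose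
    else (G.succ_exists c.v).choose

lemma zeroStrat_legal {V : Type} (G : Game V) (d : V → V → ℕ) (t : ℕ → V)
    (hties : ∀ s : G.M.S, G.M.opts s = {(0 : Fin 2)}) : Legal G 0 (zeroStrat G d t) := by
  refine ⟨fun h c => Nat.zero_le _, fun h c b => by simp [hties, zeroStrat], fun h c _ _ => ?_⟩
  simp only [zeroStrat]
  split_ifs with hw
  · exact hw.choose_spec.1
  · exact (G.succ_exists c.v).choose_spec

lemma zeroStrat_move_lt {V : Type} (G : Game V) (d : V → V → ℕ) (t : ℕ → V) (u : V)
    (h : Hist V G.M.S) (c : Conf V G.M.S) (hu : t h.length = u)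
    (hw : ∃ w, G.E c.v w ∧ d w u < d c.v u) :
    d ((zeroStrat G d t).move h c 0 0) u < d c.v u := by
  subst hu
  simp only [zeroStrat]
  rw [dif_pos hw]
  exact hw.choose_spec.2

lemma playAux_length {V : Type} (G : Game V) (σ τ : Strat V G.M) (c : Conf V G.M.S) (n : ℕ) :
    (playAux G σ τ c n).1.length = n := by
  induction n with
  | zero => rfl
  | succ n ih => simp [playAux, stepPlay, ih]

/-- One round against the zero-bidding strategy when Player 2 bids `0`: Player 1 moves. -/
lemma stepPlay_of_zero {V : Type} (G : Game V) (d : V → V → ℕ) (t : ℕ → V)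
    (hties : ∀ s : G.M.S, G.M.opts s = {(0 : Fin 2)}) (τ : Strat V G.M) (hτ : Legal G 1 τ)
    (p : Hist V G.M.S × Conf V G.M.S) (h0 : τ.bid p.1 p.2 = 0) :
    (stepPlay G (zeroStrat G d t) τ p).2.v = (zeroStrat G d t).move p.1 p.2 0 0 ∧
    (stepPlay G (zeroStrat G d t) τ p).2.B1 = p.2.B1 ∧
    (stepPlay G (zeroStrat G d t) τ p).2.B2 = p.2.B2 := by
  have hc : τ.choice p.1 p.2 0 = 0 := by simpa [hties] using hτ.2.1 p.1 p.2 0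
  have hb : (zeroStrat G d t).bid p.1 p.2 = 0 := rfl
  have hc' : (zeroStrat G d t).choice p.1 p.2 0 = 0 := rfl
  simp [stepPlay, nextConf, hb, h0, hc, hc']

/-- One round against the zero-bidding strategy when Player 2 bids a positive amount: he pays it
to Player 1. -/
lemma stepPlay_of_pos {V : Type} (G : Game V) (d : V → V → ℕ) (t : ℕ → V)
    (τ : Strat V G.M) (p : Hist V G.M.S × Conf V G.M.S) (h0 : 0 < τ.bid p.1 p.2) :
    (stepPlay G (zeroStrat G d t) τ p).2.B1 = p.2.B1 + τ.bid p.1 p.2 ∧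
    (stepPlay G (zeroStrat G d t) τ p).2.B2 = p.2.B2 - τ.bid p.1 p.2 := by
  have hb : (zeroStrat G d t).bid p.1 p.2 = 0 := rfl
  simp [stepPlay, nextConf, hb, h0]

/-- Player 1's budget is nondecreasing and bounded, and grows whenever Player 2 bids a positive
amount, so this happens only finitely often. -/
lemma eventually_bid_zero {V : Type} (G : Game V) (d : V → V → ℕ) (t : ℕ → V)
    (hties : ∀ s : G.M.S, G.M.opts s = {(0 : Fin 2)}) (τ : Strat V G.M) (hτ : Legal G 1 τ)
    (c : Conf V G.M.S) :
    ∃ M, ∀ n ≥ M, τ.bid (playAux G (zeroStrat G d t) τ c n).1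
      (playAux G (zeroStrat G d t) τ c n).2 = 0 := by
  set P := playAux G (zeroStrat G d t) τ c with hP
  have hstep : ∀ n, P (n + 1) = stepPlay G (zeroStrat G d t) τ (P n) := fun n => rfl
  have hkey : ∀ n, (P (n + 1)).2.B1 = (P n).2.B1 + τ.bid (P n).1 (P n).2 ∧
      (P (n + 1)).2.B1 + (P (n + 1)).2.B2 = (P n).2.B1 + (P n).2.B2 := by
    intro n
    have hle : τ.bid (P n).1 (P n).2 ≤ (P n).2.B2 := by
      simpa [budget] using hτ.1 (P n).1 (P n).2
    rw [hstep]
    rcases Nat.eq_zero_or_pos (τ.bid (P n).1 (P n).2) with h0 | h0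
    · obtain ⟨-, h1, h2⟩ := stepPlay_of_zero G d t hties τ hτ (P n) h0
      omega
    · obtain ⟨h1, h2⟩ := stepPlay_of_pos G d t τ (P n) h0
      omega
  have hmono : Monotone fun n => (P n).2.B1 :=
    monotone_nat_of_le_succ fun n => by have := hkey n; omega
  have hsum : ∀ n, (P n).2.B1 + (P n).2.B2 = (P 0).2.B1 + (P 0).2.B2 := by
    intro n
    induction n with
    | zero => rfl
    | succ n ih => rw [(hkey n).2, ih]
  have hbdd : BddAbove (Set.range fun n => (P n).2.B1) := by
    refine ⟨(P 0).2.B1 + (P 0).2.B2, ?_⟩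
    rintro _ ⟨n, rfl⟩
    have := hsum n
    simp only
    omega
  -- `M` is a time at which Player 1's budget attains its maximum over the play.
  obtain ⟨M, hM⟩ := Nat.sSup_mem (Set.range_nonempty _) hbdd
  refine ⟨M, fun n hn => ?_⟩
  have h1 : (P (n + 1)).2.B1 ≤ (P M).2.B1 := by
    have := le_csSup hbdd ⟨n + 1, rfl⟩
    simp only at hM this
    omega
  have h2 : (P M).2.B1 ≤ (P n).2.B1 := hmono hn
  have := (hkey n).1
  omega

/-- If Player 2 bids `0` throughout a window of length `D` that starts at time `a` and has constant
target `u`, then `u` is visited in the window, provided no value `d v u` exceeds `D`. -/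
lemma playAux_reaches_target {V : Type} (G : Game V) (d : V → V → ℕ) (t : ℕ → V)
    (hd : ∀ v u, v ≠ u → ∃ w, G.E v w ∧ d w u < d v u)
    (hties : ∀ s : G.M.S, G.M.opts s = {(0 : Fin 2)}) (τ : Strat V G.M) (hτ : Legal G 1 τ)
    (c : Conf V G.M.S) (a D : ℕ) (u : V) (hD : ∀ v, d v u ≤ D)
    (ht : ∀ j < D, t (a + j) = u)
    (hz : ∀ n ≥ a, τ.bid (playAux G (zeroStrat G d t) τ c n).1
      (playAux G (zeroStrat G d t) τ c n).2 = 0) :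
    ∃ n ≥ a, path G (zeroStrat G d t) τ c n = u := by
  by_contra! hne
  have hdec : ∀ j ≤ D, d (path G (zeroStrat G d t) τ c (a + j)) u + j ≤ D := by
    intro j
    induction j with
    | zero => exact fun _ => by simpa using hD _
    | succ j ih =>
      intro hj
      have ih := ih (by omega)
      have hw := hd _ u (hne (a + j) (by omega))
      have hmove := (stepPlay_of_zero G d t hties τ hτ _ (hz (a + j) (by omega))).1
      have hnext : path G (zeroStrat G d t) τ c (a + (j + 1)) =
          (stepPlay G (zeroStrat G d t) τ (playAux G (zeroStrat G d t) τ c (a + j))).2.v := rfl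
      have htar : t (playAux G (zeroStrat G d t) τ c (a + j)).1.length = u := by
        rw [playAux_length, ht j (by omega)]
      have hlt := zeroStrat_move_lt G d t u _ _ htar hw
      rw [← hmove, ← hnext] at hlt
      change _ < d (path G (zeroStrat G d t) τ c (a + j)) u at hlt
      omega
  obtain ⟨w, -, hw⟩ := hd _ u (hne (a + D) (by omega))
  have := hdec D le_rfl
  omega

end Bid

open Bid in
/-- In a discrete bidding game on a strongly-connected graph
in which ties are resolved by a transducer that always prefers Player 1
(Player 1 wins every tied bidding), for every pair of initial budgets and
every initial vertex and mechanism state, Player 1 has a strategy such that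
against every strategy of Player 2, the resulting play visits every vertex
infinitely often. -/
theorem stmt_19 {V : Type} [Fintype V] (G : Game V)
    (hconn : ∀ u v : V, Relation.ReflTransGen G.E u v)
    (hties : ∀ s : G.M.S, G.M.opts s = {(0 : Fin 2)}) :
    ∀ (v : V) (B1 B2 : ℕ), B1 + B2 = G.N → ∀ s : G.M.S,
      ∃ σ : Strat V G.M, Legal G 0 σ ∧
        ∀ τ : Strat V G.M, Legal G 1 τ →
          ∀ (u : V) (m : ℕ), ∃ n ≥ m, path G σ τ ⟨v, B1, B2, s⟩ n = u := by
  intro v B1 B2 _ s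
  have : Nonempty V := ⟨v⟩
  obtain ⟨d, hd⟩ := exists_dist G.E hconn
  obtain ⟨f, hf⟩ := exists_frequent_seq V
  obtain ⟨D, hD⟩ : ∃ D, ∀ v u, d v u ≤ D := by
    obtain ⟨D, hD⟩ := (Set.finite_range fun p : V × V => d p.1 p.2).bddAbove
    exact ⟨D, fun v u => hD ⟨(v, u), rfl⟩⟩
  -- Phases of length `D + 1`, so that the length is positive even if all distances vanish.
  set t : ℕ → V := fun n => f (n / (D + 1)) with ht
  refine ⟨zeroStrat G d t, zeroStrat_legal G d t hties, fun τ hτ u m => ?_⟩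
  obtain ⟨M, hM⟩ := eventually_bid_zero G d t hties τ hτ ⟨v, B1, B2, s⟩
  obtain ⟨k, hk, hku⟩ := hf u (max m M)
  have hka : k ≤ (D + 1) * k := Nat.le_mul_of_pos_left k (by omega)
  have hmk : m ≤ k := le_trans (le_max_left _ _) hk
  have hMk : M ≤ k := le_trans (le_max_right _ _) hk
  obtain ⟨n, hn, hnu⟩ := playAux_reaches_target G d t hd hties τ hτ ⟨v, B1, B2, s⟩
    ((D + 1) * k) D u (fun v => hD v u)
    (fun j hj => by
      simp only [ht]
      rw [Nat.mul_add_div (by omega), Nat.div_eq_of_lt (by omega), Nat.add_zero, hku])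
    (fun n hn => hM n (by omega))
  exact ⟨n, by omega, hnu⟩
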